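/- arXiv:math/0610093 — 6 statements merged into one kernel-verified Lean document; each statement's English description precedes it below -/
import Mathlib

section
/- Let p be a prime, K an algebraically closed field of characteristic p, and n ≥ 1. Then the additive group endomorphism P = F − id of W_n(K), sending (a_1,…,a_n) to (a_1^p,…,a_n^p) − (a_1,…,a_n) (subtraction taken in the Witt ring), is surjective: for every a ∈ W_n(K) there exists r ∈ W_n(K) with F(r) − r = a. -/
/-- The Frobenius `F : W_n(R) → W_n(R)` sending `(a_1,…,a_n)` to `(a_1^p,…,a_n^p)`. -/
def TruncatedWittVector.tfrob (p n : ℕ) (R : Type*) [CommRing R]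
    (x : TruncatedWittVector p n R) : TruncatedWittVector p n R :=
  TruncatedWittVector.mk p fun i => (x.coeff i) ^ p

theorem ASW_exists_root (p : ℕ) [Fact p.Prime] (K : Type) [Field K] [IsAlgClosed K]
    (c : K) : ∃ t : K, t ^ p - t = c := by
  have hp : 1 < p := (Fact.out : p.Prime).one_lt
  have hd : (Polynomial.X ^ p - Polynomial.X - Polynomial.C c : Polynomial K).degree ≠ 0 := by
    have h1 : (Polynomial.X ^ p - Polynomial.X - Polynomial.C c : Polynomial K).degree = p := by
      rw [sub_sub]
      rw [Polynomial.degree_sub_eq_left_of_degree_lt]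
      · simp
      · rw [Polynomial.degree_X_add_C, Polynomial.degree_X_pow]
        exact_mod_cast hp
    rw [h1]
    exact_mod_cast (by omega : p ≠ 0)
  obtain ⟨t, ht⟩ := IsAlgClosed.exists_root _ hd
  refine ⟨t, ?_⟩
  simpa [Polynomial.IsRoot, sub_eq_zero] using ht

theorem ASW_aux (p : ℕ) [Fact p.Prime] (K : Type) [Field K] [IsAlgClosed K] [CharP K p]
    (a : WittVector p K) (n : ℕ) : ∃ r c : WittVector p K,
      WittVector.frobenius r - r + (WittVector.verschiebung^[n]) c = a := by
  induction n with
  | zero => exact ⟨0, a, by simp⟩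
  | succ n ih =>
    obtain ⟨r, c, h⟩ := ih
    obtain ⟨t, ht⟩ := ASW_exists_root p K (c.coeff 0)
    set x : WittVector p K := WittVector.teichmuller p t with hx
    have h0 : (c - (WittVector.frobenius x - x)).coeff 0 = 0 := by
      have hs : ∀ y z : WittVector p K, (y - z).coeff 0 = y.coeff 0 - z.coeff 0 :=
        fun y z => map_sub (WittVector.constantCoeff (p := p) (R := K)) y z
      rw [hs, hs, WittVector.coeff_frobenius_charP, hx, WittVector.teichmuller_coeff_zero, ht,
        sub_self]
    have h1 := WittVector.eq_iterate_verschiebung (n := 1)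
      (x := c - (WittVector.frobenius x - x)) (fun i hi => by
        obtain rfl : i = 0 := by omega
        exact h0)
    set d := (c - (WittVector.frobenius x - x)).shift 1
    refine ⟨r + (WittVector.verschiebung^[n]) x, d, ?_⟩
    have hc : c = WittVector.verschiebung d + (WittVector.frobenius x - x) := by
      rw [Function.iterate_one] at h1
      rw [← h1]; abel
    have hcomm : WittVector.frobenius ((WittVector.verschiebung^[n]) x)
        = (WittVector.verschiebung^[n]) (WittVector.frobenius x) :=
      ((WittVector.verschiebung_frobenius_comm (p := p) (R := K)).iterate_left n x).symm
    rw [← h, Function.iterate_succ_apply, map_add, hcomm]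
    conv_rhs => rw [hc]
    rw [iterate_map_add, iterate_map_sub]
    abel

/-- For a prime `p`, an algebraically closed field `K` of characteristic `p`
and `n ≥ 1`, the additive endomorphism `P = F - id` of `W_n(K)` is surjective: every
`a ∈ W_n(K)` is of the form `F(r) - r` for some `r ∈ W_n(K)`. -/
theorem artinSchreierWitt_surjective_of_isAlgClosed
    (p : ℕ) [Fact p.Prime] (K : Type) [Field K] [IsAlgClosed K] [CharP K p]
    (n : ℕ) (hn : 1 ≤ n) (a : TruncatedWittVector p n K) :
    ∃ r : TruncatedWittVector p n K, TruncatedWittVector.tfrob p n K r - r = a := by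
  obtain ⟨a, rfl⟩ := WittVector.truncate_surjective p n K a
  obtain ⟨r, c, h⟩ := ASW_aux p K a n
  refine ⟨WittVector.truncate n r, ?_⟩
  have hf : TruncatedWittVector.tfrob p n K (WittVector.truncate n r)
      = WittVector.truncate n (WittVector.frobenius r) := by
    ext i
    simp [TruncatedWittVector.tfrob, WittVector.coeff_frobenius_charP]
  have hv : WittVector.truncate n ((WittVector.verschiebung^[n]) c) = 0 := by
    rw [← RingHom.mem_ker, WittVector.mem_ker_truncate]
    intro i hi
    exact WittVector.iterate_verschiebung_coeff_eq_zero c hi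
  rw [hf, ← h, map_add, hv, add_zero, map_sub]
end

section
/- Let p be a prime, A an integrally closed domain of characteristic p with fraction field K, and n ≥ 1. If x ∈ W_n(K) is such that F(x) − x lies in the image of the natural ring homomorphism W_n(A) → W_n(K), then x itself lies in the image of W_n(A) → W_n(K). -/
/-- The ring homomorphism `W_n(R) → W_n(S)` induced coordinatewise by a ring
homomorphism `f : R → S`, as a function on truncated Witt vectors. -/
def TruncatedWittVector.tmap (p n : ℕ) {R S : Type*} [CommRing R] [CommRing S]
    (f : R →+* S) (x : TruncatedWittVector p n R) : TruncatedWittVector p n S :=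
  TruncatedWittVector.mk p fun i => f (x.coeff i)

theorem artinSchreier_mem_range {p : ℕ} [Fact p.Prime] {A K : Type} [CommRing A] [IsDomain A]
    [IsIntegrallyClosed A] [Field K] [Algebra A K] [IsFractionRing A K]
    (y : K) (c : A) (h : algebraMap A K c = y ^ p - y) : ∃ z, algebraMap A K z = y := by
  have hp : 1 < p := (Fact.out : p.Prime).one_lt
  have hy : IsIntegral A y := by
    refine ⟨Polynomial.X ^ p - (Polynomial.X + Polynomial.C c), ?_, ?_⟩
    · apply Polynomial.monic_X_pow_sub
      rw [Polynomial.degree_X_add_C]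
      exact_mod_cast hp
    · simp [h]
  exact IsIntegrallyClosed.isIntegral_iff.mp hy

theorem coeff_frob_sub_of_zero {p : ℕ} [Fact p.Prime] {K : Type} [CommRing K] [CharP K p]
    (T : WittVector p K) (k : ℕ) (hT : ∀ i < k, T.coeff i = 0) :
    (WittVector.frobenius T - T).coeff k = T.coeff k ^ p - T.coeff k := by
  have e := WittVector.eq_iterate_verschiebung hT
  set Y := T.shift k
  have hk : T.coeff k = Y.coeff 0 := by simp [Y, WittVector.shift_coeff]
  have hF : WittVector.frobenius T = WittVector.verschiebung^[k] (WittVector.frobenius Y) := by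
    rw [e]
    exact (WittVector.verschiebung_frobenius_comm.symm.iterate_right k) Y
  have hD : WittVector.frobenius T - T =
      WittVector.verschiebung^[k] (WittVector.frobenius Y - Y) := by
    rw [iterate_map_sub, ← hF, ← e]
  have h0 := WittVector.iterate_verschiebung_coeff (WittVector.frobenius Y - Y) k 0
  rw [zero_add] at h0
  rw [hD, h0, hk]
  have := map_sub (WittVector.constantCoeff (p := p) (R := K)) (WittVector.frobenius Y) Y
  simpa [WittVector.constantCoeff_apply, WittVector.coeff_frobenius_charP] using this

/-- Let `p` be a prime, `A` an integrally closed domain of characteristic `p`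
with fraction field `K`, and `n ≥ 1`. If `x ∈ W_n(K)` is such that `F(x) - x` lies in the
image of `W_n(A) → W_n(K)`, then `x` itself lies in the image of `W_n(A) → W_n(K)`. -/
theorem mem_wittVector_of_artinSchreierWitt_mem
    (p : ℕ) [Fact p.Prime] (A K : Type) [CommRing A] [IsDomain A] [CharP A p]
    [IsIntegrallyClosed A] [Field K] [Algebra A K] [IsFractionRing A K]
    (n : ℕ) (hn : 1 ≤ n) (x : TruncatedWittVector p n K)
    (h : ∃ a : TruncatedWittVector p n A,
        TruncatedWittVector.tmap p n (algebraMap A K) a =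
          TruncatedWittVector.tfrob p n K x - x) :
    ∃ y : TruncatedWittVector p n A,
      TruncatedWittVector.tmap p n (algebraMap A K) y = x := by
  classical
  obtain ⟨a, ha⟩ := h
  have : CharP K p := charP_of_injective_algebraMap (IsFractionRing.injective A K) p
  set φ := algebraMap A K
  set X : WittVector p K := x.out with hX
  have hx : WittVector.truncate n X = x := TruncatedWittVector.truncateFun_out x
  have hfx : WittVector.truncate n (WittVector.frobenius X) =
      TruncatedWittVector.tfrob p n K x := by
    ext i
    simp [TruncatedWittVector.tfrob, WittVector.coeff_frobenius_charP, hX]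
  have hax : WittVector.truncate n (WittVector.map φ a.out) =
      TruncatedWittVector.tmap p n φ a := by
    ext i
    simp [TruncatedWittVector.tmap, WittVector.map_coeff]
  have hE : WittVector.truncate n (WittVector.map φ a.out) =
      WittVector.truncate n (WittVector.frobenius X - X) := by
    rw [map_sub, hx, hfx, hax, ha]
  have key : ∀ k, k < n → ∃ z, φ z = X.coeff k := by
    intro k
    induction k using Nat.strong_induction_on with
    | _ k ih =>
      intro hk
      choose! g hg using fun i (hi : i < k) => ih i hi (hi.trans hk)
      let b : WittVector p A := WittVector.mk p fun i => if i < k then g i else 0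
      have hb : WittVector.map φ b = WittVector.init k X := by
        ext i
        by_cases hi : i < k
        · simp [b, WittVector.init, WittVector.select, WittVector.map_coeff, hi, hg i hi]
        · simp [b, WittVector.init, WittVector.select, WittVector.map_coeff, hi]
      set T := WittVector.tail k X with hT
      have hXs : X = WittVector.map φ b + T := by rw [hb, WittVector.init_add_tail]
      have hT0 : ∀ i < k, T.coeff i = 0 := by
        intro i hi
        simp [hT, WittVector.tail, WittVector.select, hi]
      have hTk : T.coeff k = X.coeff k := by
        simp [hT, WittVector.tail, WittVector.select]
      have hFb : WittVector.frobenius (WittVector.map φ b) =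
          WittVector.map φ (WittVector.frobenius b) := by
        ext i
        simp [WittVector.coeff_frobenius_charP, WittVector.map_coeff]
      have hD : WittVector.truncate n
          (WittVector.map φ (a.out - (WittVector.frobenius b - b))) =
          WittVector.truncate n (WittVector.frobenius T - T) := by
        rw [map_sub (WittVector.map φ), map_sub (WittVector.truncate n), hE, ← map_sub]
        congr 1
        rw [hXs, map_sub (WittVector.map φ), ← hFb, map_add]
        ring
      have hc := congrArg (TruncatedWittVector.coeff ⟨k, hk⟩) hD
      simp only [WittVector.coeff_truncate] at hc
      rw [coeff_frob_sub_of_zero T k hT0, hTk, WittVector.map_coeff] at hc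
      exact artinSchreier_mem_range (p := p) _ _ hc
  choose! g hg using key
  refine ⟨TruncatedWittVector.mk p fun i => g i, ?_⟩
  ext i
  simp only [TruncatedWittVector.tmap, TruncatedWittVector.coeff_mk]
  rw [hg i i.2, hX, TruncatedWittVector.coeff_out]
end

section
/- Let p be a prime, K a field of characteristic p, K^sep a separable closure of K with Galois group G_K = Gal(K^sep/K) equipped with the Krull topology, and n ≥ 1. For a ∈ W_n(K), choose r ∈ W_n(K^sep) with F(r) − r = a; then the map sending the class of a in W_n(K)/P(W_n(K)) to the continuous homomorphism G_K → W_n(𝔽_p), g ↦ g·r − r (where G_K acts on W_n(K^sep) coordinatewise and W_n(𝔽_p) is identified with the F-fixed points of W_n(K^sep)), is a well-defined isomorphism of abelian groups W_n(K)/P(W_n(K)) ≅ Hom_cont(G_K, W_n(𝔽_p)). -/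
namespace ASW

set_option linter.unusedSectionVars false

open TruncatedWittVector

/-- `tmap` as a ring homomorphism. -/
noncomputable def tmapHom (p n : ℕ) [Fact p.Prime] {R S : Type*} [CommRing R] [CommRing S]
    (f : R →+* S) : TruncatedWittVector p n R →+* TruncatedWittVector p n S :=
  RingHom.liftOfRightInverse (WittVector.truncate n) out truncateFun_out
    ⟨(WittVector.truncate n).comp (WittVector.map f), by
      intro x
      rw [RingHom.mem_ker, ← RingHom.mem_ker, WittVector.mem_ker_truncate]
      intro h
      rw [RingHom.mem_ker, RingHom.comp_apply, ← RingHom.mem_ker, WittVector.mem_ker_truncate]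
      intro i hi
      rw [WittVector.map_coeff, h i hi, map_zero]⟩

theorem tmapHom_truncate (p n : ℕ) [Fact p.Prime] {R S : Type*} [CommRing R] [CommRing S]
    (f : R →+* S) (x : WittVector p R) :
    tmapHom p n f (WittVector.truncate n x) = WittVector.truncate n (WittVector.map f x) :=
  RingHom.liftOfRightInverse_comp_apply _ _ _ _ _

theorem tmap_eq (p n : ℕ) [Fact p.Prime] {R S : Type*} [CommRing R] [CommRing S]
    (f : R →+* S) (x : TruncatedWittVector p n R) : tmap p n f x = tmapHom p n f x := by
  obtain ⟨y, rfl⟩ := WittVector.truncate_surjective p n R x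
  rw [tmapHom_truncate]
  ext i
  simp [tmap]

theorem coeff_tmapHom (p n : ℕ) [Fact p.Prime] {R S : Type*} [CommRing R] [CommRing S]
    (f : R →+* S) (x : TruncatedWittVector p n R) (i : Fin n) :
    (tmapHom p n f x).coeff i = f (x.coeff i) := by
  rw [← tmap_eq]; simp [tmap]

theorem tfrob_eq (p n : ℕ) [Fact p.Prime] {R : Type*} [CommRing R] [CharP R p]
    (x : TruncatedWittVector p n R) : tfrob p n R x = tmapHom p n (frobenius R p) x := by
  ext i
  rw [coeff_tmapHom]; simp [tfrob, frobenius_def]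

theorem tmapHom_injective (p n : ℕ) [Fact p.Prime] {R S : Type*} [CommRing R] [CommRing S]
    (f : R →+* S) (hf : Function.Injective f) : Function.Injective (tmapHom p n f) := by
  intro x y h
  ext i
  apply hf
  rw [← coeff_tmapHom, ← coeff_tmapHom, h]

theorem tmapHom_tmapHom (p n : ℕ) [Fact p.Prime] {R S T : Type*} [CommRing R] [CommRing S]
    [CommRing T] (f : R →+* S) (g : S →+* T) (x : TruncatedWittVector p n R) :
    tmapHom p n g (tmapHom p n f x) = tmapHom p n (g.comp f) x := by
  ext i
  simp [coeff_tmapHom]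

theorem mem_range_of_coeff (p n : ℕ) [Fact p.Prime] {R S : Type*} [CommRing R] [CommRing S]
    (f : R →+* S) (x : TruncatedWittVector p n S) (h : ∀ i, ∃ y, f y = x.coeff i) :
    ∃ y, tmapHom p n f y = x := by
  choose y hy using h
  refine ⟨TruncatedWittVector.mk p y, ?_⟩
  ext i
  rw [coeff_tmapHom, coeff_mk, hy]

theorem iterV_add (p : ℕ) [Fact p.Prime] {R : Type*} [CommRing R] (m : ℕ) (x y : WittVector p R) :
    WittVector.verschiebung^[m] (x + y) =
      WittVector.verschiebung^[m] x + WittVector.verschiebung^[m] y := by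
  induction m with
  | zero => rfl
  | succ m ih => simp only [Function.iterate_succ_apply', ih, map_add]

theorem iterV_sub (p : ℕ) [Fact p.Prime] {R : Type*} [CommRing R] (m : ℕ) (x y : WittVector p R) :
    WittVector.verschiebung^[m] (x - y) =
      WittVector.verschiebung^[m] x - WittVector.verschiebung^[m] y := by
  induction m with
  | zero => rfl
  | succ m ih => simp only [Function.iterate_succ_apply', ih, map_sub]

theorem coeff_zero_add (p : ℕ) [Fact p.Prime] {R : Type*} [CommRing R] (x y : WittVector p R) :
    (x + y).coeff 0 = x.coeff 0 + y.coeff 0 :=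
  map_add (WittVector.constantCoeff : WittVector p R →+* R) x y

theorem coeff_zero_sub (p : ℕ) [Fact p.Prime] {R : Type*} [CommRing R] (x y : WittVector p R) :
    (x - y).coeff 0 = x.coeff 0 - y.coeff 0 :=
  map_sub (WittVector.constantCoeff : WittVector p R →+* R) x y

theorem exists_approx (p : ℕ) [Fact p.Prime] {L : Type*} [Field L] [CharP L p] [IsSepClosed L]
    (a : WittVector p L) (m : ℕ) :
    ∃ r : WittVector p L, ∀ i < m, (WittVector.frobenius r - r - a).coeff i = 0 := by
  induction m with
  | zero => exact ⟨0, by simp⟩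
  | succ m ih =>
    obtain ⟨r, hr⟩ := ih
    have hV := WittVector.eq_iterate_verschiebung hr
    set b := (WittVector.frobenius r - r - a).shift m with hb
    obtain ⟨x, hx⟩ := IsSepClosed.exists_root_C_mul_X_pow_add_C_mul_X_add_C' p p (1 : L) (-1)
      (b.coeff 0) dvd_rfl (Fact.out : p.Prime).two_le (by simp)
    refine ⟨r + WittVector.verschiebung^[m] (WittVector.teichmuller p x), ?_⟩
    have key : WittVector.frobenius (r + WittVector.verschiebung^[m] (WittVector.teichmuller p x))
        - (r + WittVector.verschiebung^[m] (WittVector.teichmuller p x)) - a =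
        WittVector.verschiebung^[m] (b + (WittVector.frobenius (WittVector.teichmuller p x)
          - WittVector.teichmuller p x)) := by
      have hc := (WittVector.verschiebung_frobenius_comm (p := p) (R := L)).iterate_left m
        (WittVector.teichmuller p x)
      rw [iterV_add, iterV_sub, hc, ← hV, map_add]
      ring
    intro i hi
    rw [key]
    rcases Nat.lt_succ_iff_lt_or_eq.mp hi with h | h
    · exact WittVector.iterate_verschiebung_coeff_eq_zero _ h
    · subst h
      have := WittVector.iterate_verschiebung_coeff (b + (WittVector.frobenius
        (WittVector.teichmuller p x) - WittVector.teichmuller p x)) i 0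
      rw [zero_add] at this
      rw [this, coeff_zero_add, coeff_zero_sub, WittVector.coeff_frobenius_charP,
        WittVector.teichmuller_coeff_zero]
      linear_combination hx

theorem exists_P (p n : ℕ) [Fact p.Prime] {L : Type*} [Field L] [CharP L p] [IsSepClosed L]
    (a : TruncatedWittVector p n L) :
    ∃ r : TruncatedWittVector p n L, tmapHom p n (frobenius L p) r - r = a := by
  obtain ⟨a, rfl⟩ := WittVector.truncate_surjective p n L a
  obtain ⟨r, hr⟩ := exists_approx p a n
  refine ⟨WittVector.truncate n r, ?_⟩
  rw [tmapHom_truncate, ← WittVector.frobenius_eq_map_frobenius, ← sub_eq_zero, ← map_sub,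
    ← map_sub, ← RingHom.mem_ker, WittVector.mem_ker_truncate]
  exact hr

theorem exists_of_frob_fixed (p n : ℕ) [Fact p.Prime] {L : Type*} [Field L] [CharP L p]
    (x : TruncatedWittVector p n L) (hx : tmapHom p n (frobenius L p) x = x) :
    ∃ y, tmapHom p n (ZMod.castHom (dvd_refl p) L) y = x := by
  apply mem_range_of_coeff
  intro i
  have h1 : x.coeff i ^ p = x.coeff i := by
    conv_rhs => rw [← hx]
    rw [coeff_tmapHom, frobenius_def]
  rw [← Subfield.mem_bot_iff_pow_eq_self L (p := p), ← ZMod.fieldRange_castHom_eq_bot p] at h1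
  exact h1

theorem frob_fixed (p n : ℕ) [Fact p.Prime] {L : Type*} [Field L] [CharP L p]
    (y : TruncatedWittVector p n (ZMod p)) :
    tmapHom p n (frobenius L p) (tmapHom p n (ZMod.castHom (dvd_refl p) L) y) =
      tmapHom p n (ZMod.castHom (dvd_refl p) L) y := by
  rw [tmapHom_tmapHom]
  congr 1
  congr 1
  exact Subsingleton.elim _ _

theorem gal_fixed (p n : ℕ) [Fact p.Prime] {L : Type*} [Field L] [CharP L p]
    (g : L →+* L) (y : TruncatedWittVector p n (ZMod p)) :
    tmapHom p n g (tmapHom p n (ZMod.castHom (dvd_refl p) L) y) =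
      tmapHom p n (ZMod.castHom (dvd_refl p) L) y := by
  rw [tmapHom_tmapHom]
  congr 1
  congr 1
  exact Subsingleton.elim _ _

theorem frob_comm (p n : ℕ) [Fact p.Prime] {R S : Type*} [CommRing R] [CommRing S] [CharP R p]
    [CharP S p] (g : R →+* S) (y : TruncatedWittVector p n R) :
    tmapHom p n (frobenius S p) (tmapHom p n g y) = tmapHom p n g (tmapHom p n (frobenius R p) y) := by
  rw [tmapHom_tmapHom, tmapHom_tmapHom]
  congr 2
  ext x
  simp [frobenius_def]

section gal

variable (p : ℕ) [Fact p.Prime] (n : ℕ) {K L : Type} [Field K] [CharP K p] [Field L] [CharP L p]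
    [Algebra K L]

theorem exists_of_gal_fixed [IsGalois K L] (x : TruncatedWittVector p n L)
    (hx : ∀ g : L ≃ₐ[K] L, tmapHom p n (g : L →+* L) x = x) :
    ∃ y, tmapHom p n (algebraMap K L) y = x := by
  apply mem_range_of_coeff
  intro i
  refine (InfiniteGalois.mem_range_algebraMap_iff_fixed (k := K) (x.coeff i)).mpr ?_
  intro g
  conv_rhs => rw [← hx g]
  rw [coeff_tmapHom]
  rfl

theorem gal_algebraMap (g : L ≃ₐ[K] L) (x : TruncatedWittVector p n K) :
    tmapHom p n (g : L →+* L) (tmapHom p n (algebraMap K L) x) = tmapHom p n (algebraMap K L) x := by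
  rw [tmapHom_tmapHom]
  congr 2
  ext x
  simp

theorem gal_mul (g h : L ≃ₐ[K] L) (x : TruncatedWittVector p n L) :
    tmapHom p n ((g * h : L ≃ₐ[K] L) : L →+* L) x =
      tmapHom p n (g : L →+* L) (tmapHom p n (h : L →+* L) x) := by
  rw [tmapHom_tmapHom]
  rfl

/-- Additive Hilbert 90 for Witt vectors. -/
theorem hilbert90 [IsGalois K L] (c : (L ≃ₐ[K] L) → TruncatedWittVector p n L)
    (hc : ∀ g h : L ≃ₐ[K] L, c (g * h) = c g + tmapHom p n (g : L →+* L) (c h))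
    (E : IntermediateField K L) [FiniteDimensional K E] [Normal K E]
    (hE : ∀ g ∈ E.fixingSubgroup, c g = 0) :
    ∃ r, ∀ g : L ≃ₐ[K] L, tmapHom p n (g : L →+* L) r - r = c g := by
  classical
  have : IsGalois K E := ⟨⟩
  obtain ⟨t, ht⟩ := Algebra.trace_surjective K E 1
  have hsur := AlgEquiv.restrictNormalHom_surjective (F := K) (K₁ := E) L
  choose lift hlift using hsur
  have hres : ∀ g : L ≃ₐ[K] L, c (lift (AlgEquiv.restrictNormalHom E g)) = c g := by
    intro g
    set g' := lift (AlgEquiv.restrictNormalHom E g) with hg'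
    have h1 : g⁻¹ * g' ∈ E.fixingSubgroup := by
      rw [← IntermediateField.restrictNormalHom_ker, MonoidHom.mem_ker, map_mul, map_inv, hg',
        hlift, inv_mul_cancel]
    have h2 := hc g (g⁻¹ * g')
    rw [hE _ h1, map_zero, add_zero, mul_inv_cancel_left] at h2
    exact h2
  let T : (E ≃ₐ[K] E) → TruncatedWittVector p n L := fun σ =>
    WittVector.truncate n (WittVector.teichmuller p ((σ t : E) : L))
  have hT : ∀ (g : L ≃ₐ[K] L) σ, tmapHom p n (g : L →+* L) (T σ) =
      T (AlgEquiv.restrictNormalHom E g * σ) := by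
    intro g σ
    simp only [T]
    rw [tmapHom_truncate, WittVector.map_teichmuller]
    congr 2
    exact (AlgEquiv.restrictNormalHom_apply E g (σ t)).symm
  let s := ∑ σ, T σ
  have hs : ∀ g : L ≃ₐ[K] L, tmapHom p n (g : L →+* L) s = s := by
    intro g
    simp only [s, map_sum, hT]
    exact Fintype.sum_equiv (Equiv.mulLeft (AlgEquiv.restrictNormalHom E g)) _ _ (fun _ => rfl)
  have hsu : IsUnit s := by
    have h1 : s = WittVector.truncate n (∑ σ : E ≃ₐ[K] E,
        WittVector.teichmuller p ((σ t : E) : L)) := by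
      simp only [s, T, map_sum]
    rw [h1]
    apply IsUnit.map
    apply WittVector.isUnit_of_coeff_zero_ne_zero
    have h2 : (∑ σ : E ≃ₐ[K] E, WittVector.teichmuller p ((σ t : E) : L)).coeff 0 =
        ∑ σ : E ≃ₐ[K] E, ((σ t : E) : L) := by
      rw [← WittVector.constantCoeff_apply, map_sum]
      simp [WittVector.teichmuller_coeff_zero]
    rw [h2]
    have h3 := trace_eq_sum_automorphisms (K := K) (L := E) t
    rw [ht, map_one] at h3
    have h4 := congrArg (algebraMap E L) h3
    rw [map_one, map_sum] at h4
    have h5 : ∑ σ : E ≃ₐ[K] E, ((σ t : E) : L) = 1 := h4.symm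
    rw [h5]
    exact one_ne_zero
  obtain ⟨u, hu⟩ := hsu.exists_right_inv
  have hgu : ∀ g : L ≃ₐ[K] L, tmapHom p n (g : L →+* L) u = u := by
    intro g
    have := congrArg (tmapHom p n (g : L →+* L)) hu
    rw [map_mul, hs, map_one, ← hu] at this
    exact hsu.mul_left_cancel this
  refine ⟨-(u * ∑ σ, c (lift σ) * T σ), ?_⟩
  intro g
  have h1 : tmapHom p n (g : L →+* L) (∑ σ, c (lift σ) * T σ) =
      (∑ σ, c (lift σ) * T σ) - c g * s := by
    rw [map_sum]
    have : ∀ σ, tmapHom p n (g : L →+* L) (c (lift σ) * T σ) =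
        (c (lift (AlgEquiv.restrictNormalHom E g * σ)) - c g) *
          T (AlgEquiv.restrictNormalHom E g * σ) := by
      intro σ
      rw [map_mul, hT]
      congr 1
      have h := hres (g * lift σ)
      rw [map_mul, hlift, hc] at h
      rw [h]; ring
    rw [Finset.sum_congr rfl (fun σ _ => this σ)]
    rw [Fintype.sum_equiv (Equiv.mulLeft (AlgEquiv.restrictNormalHom E g))
      (fun σ => (c (lift (AlgEquiv.restrictNormalHom E g * σ)) - c g) *
          T (AlgEquiv.restrictNormalHom E g * σ))
      (fun σ => (c (lift σ) - c g) * T σ) (fun _ => rfl)]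
    simp only [sub_mul, Finset.sum_sub_distrib, s, Finset.mul_sum]
  rw [map_neg, map_mul, hgu, h1]
  linear_combination c g * hu

/-- The stabilizer of a Witt vector contains an open subgroup. -/
theorem exists_fixing [IsGalois K L] (r : TruncatedWittVector p n L) :
    ∃ E : IntermediateField K L, FiniteDimensional K E ∧
      ∀ g ∈ E.fixingSubgroup, tmapHom p n (g : L →+* L) r = r := by
  refine ⟨IntermediateField.adjoin K (Set.range fun i => r.coeff i), ?_, ?_⟩
  · have : Finite (Set.range fun i => r.coeff i) := Set.finite_range _
    exact IntermediateField.finiteDimensional_adjoin fun x _ =>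
      Algebra.IsIntegral.isIntegral x
  · intro g hg
    ext i
    rw [coeff_tmapHom]
    rw [IntermediateField.mem_fixingSubgroup_iff] at hg
    exact hg _ (IntermediateField.subset_adjoin _ _ ⟨i, rfl⟩)

end gal

end ASW

open TruncatedWittVector ASW in
/-- Let `p` be a prime, `K` a field of characteristic `p`, `L` a separable
closure of `K` with Galois group `G_K = L ≃ₐ[K] L` carrying the Krull topology, and
`n ≥ 1`.  There is a map `Φ` sending `a ∈ W_n(K)` to the continuous homomorphism
`G_K → W_n(𝔽_p)`, `g ↦ g·r - r`, where `r ∈ W_n(L)` is any solution of `F(r) - r = a`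
(such `r` exist; `g` acts coordinatewise and `W_n(𝔽_p)` is identified with the
`F`-fixed vectors of `W_n(L)` via the coordinatewise inclusion `𝔽_p → L`); `Φ` is
independent of the choice of `r`, additive, its kernel is exactly `P(W_n(K))`, and every
continuous homomorphism `G_K → W_n(𝔽_p)` arises this way.  In other words, `Φ` descends
to a well-defined isomorphism of abelian groups
`W_n(K)/P(W_n(K)) ≅ Hom_cont(G_K, W_n(𝔽_p))`. -/
theorem artinSchreierWitt_iso_hom_cont
    (p : ℕ) [Fact p.Prime] (K L : Type) [Field K] [CharP K p] [Field L] [CharP L p]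
    [Algebra K L] [IsSepClosure K L] (n : ℕ) (hn : 1 ≤ n) :
    ∃ Φ : TruncatedWittVector p n K → (L ≃ₐ[K] L) → TruncatedWittVector p n (ZMod p),
      (∀ a : TruncatedWittVector p n K,
        ∃ r : TruncatedWittVector p n L,
          tfrob p n L r - r = tmap p n (algebraMap K L) a) ∧
      (∀ (a : TruncatedWittVector p n K) (r : TruncatedWittVector p n L),
        tfrob p n L r - r = tmap p n (algebraMap K L) a →
        ∀ g : L ≃ₐ[K] L,
          tmap p n (ZMod.castHom (dvd_refl p) L) (Φ a g) =
            tmap p n (g : L →+* L) r - r) ∧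
      (∀ (a : TruncatedWittVector p n K) (g h : L ≃ₐ[K] L),
        Φ a (g * h) = Φ a g + Φ a h) ∧
      (∀ a : TruncatedWittVector p n K,
        @Continuous _ _ (krullTopology K L) ⊥ (Φ a)) ∧
      (∀ a b : TruncatedWittVector p n K, Φ (a + b) = Φ a + Φ b) ∧
      (∀ a : TruncatedWittVector p n K,
        (∀ g : L ≃ₐ[K] L, Φ a g = 0) ↔
          ∃ r : TruncatedWittVector p n K, tfrob p n K r - r = a) ∧
      (∀ χ : (L ≃ₐ[K] L) → TruncatedWittVector p n (ZMod p),
        (∀ g h : L ≃ₐ[K] L, χ (g * h) = χ g + χ h) →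
        @Continuous _ _ (krullTopology K L) ⊥ χ →
          ∃ a : TruncatedWittVector p n K, Φ a = χ) := by
  have hsc : IsSepClosed L := IsSepClosure.sep_closed K
  have hal : Function.Injective (tmapHom p n (algebraMap K L)) :=
    tmapHom_injective p n _ (algebraMap K L).injective
  have hzl : Function.Injective (tmapHom p n (ZMod.castHom (dvd_refl p) L)) :=
    tmapHom_injective p n _ (ZMod.castHom (dvd_refl p) L).injective
  simp only [tmap_eq, tfrob_eq]
  have hex : ∀ a : TruncatedWittVector p n K, ∃ r : TruncatedWittVector p n L,
      tmapHom p n (frobenius L p) r - r = tmapHom p n (algebraMap K L) a :=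
    fun a => exists_P p n _
  choose ρ hρ using hex
  have hfix : ∀ (a : TruncatedWittVector p n K) (g : L ≃ₐ[K] L),
      ∃ y, tmapHom p n (ZMod.castHom (dvd_refl p) L) y = tmapHom p n (g : L →+* L) (ρ a) - ρ a := by
    intro a g
    apply exists_of_frob_fixed
    have h1 := hρ a
    have h2 := congrArg (tmapHom p n (g : L →+* L)) h1
    rw [gal_algebraMap, map_sub, ← frob_comm] at h2
    rw [map_sub]
    linear_combination h2 - h1
  choose Φ hΦ using hfix
  have hind : ∀ (a : TruncatedWittVector p n K) (r : TruncatedWittVector p n L),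
      tmapHom p n (frobenius L p) r - r = tmapHom p n (algebraMap K L) a →
      ∀ g : L ≃ₐ[K] L, tmapHom p n (ZMod.castHom (dvd_refl p) L) (Φ a g) =
        tmapHom p n (g : L →+* L) r - r := by
    intro a r hr g
    obtain ⟨y, hy⟩ := exists_of_frob_fixed p n (r - ρ a) (by
      rw [map_sub]; linear_combination hr - hρ a)
    have h1 := gal_fixed p n (g : L →+* L) y
    rw [hy, map_sub] at h1
    rw [hΦ]
    linear_combination -h1
  have hmul : ∀ (a : TruncatedWittVector p n K) (g h : L ≃ₐ[K] L),
      Φ a (g * h) = Φ a g + Φ a h := by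
    intro a g h
    apply hzl
    have h1 := gal_fixed p n (g : L →+* L) (Φ a h)
    rw [hΦ, map_sub] at h1
    rw [map_add, hΦ, hΦ, hΦ, gal_mul]
    linear_combination h1
  refine ⟨Φ, fun a => ⟨ρ a, hρ a⟩, hind, hmul, ?_, ?_, ?_, ?_⟩
  · intro a
    obtain ⟨E, hfd, hE⟩ := exists_fixing p n (K := K) (ρ a)
    refine @Continuous.mk _ _ (krullTopology K L) ⊥ _ fun s _ => ?_
    rw [isOpen_iff_mem_nhds]
    intro g hg
    have ho : (Set.image (fun x => g * x) (E.fixingSubgroup : Set (L ≃ₐ[K] L))) ∈ nhds g := by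
      refine IsOpen.mem_nhds (isOpenMap_mul_left g _ E.fixingSubgroup_isOpen) ?_
      exact ⟨1, one_mem _, by simp⟩
    refine Filter.mem_of_superset ho ?_
    rintro _ ⟨h, hh, rfl⟩
    have h0 : Φ a h = 0 := by
      apply hzl
      rw [hΦ, hE h hh, sub_self, map_zero]
    change Φ a (g * h) ∈ s
    rw [hmul, h0, add_zero]
    exact hg
  · intro a b
    funext g
    apply hzl
    rw [hind (a + b) (ρ a + ρ b) (by
      rw [map_add, map_add]; linear_combination hρ a + hρ b) g]
    rw [Pi.add_apply, map_add, map_add, hΦ, hΦ]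
    ring
  · intro a
    constructor
    · intro h
      obtain ⟨y, hy⟩ := exists_of_gal_fixed p n (K := K) (ρ a) (fun g => by
        have := hΦ a g
        rw [h g, map_zero] at this
        exact (sub_eq_zero.mp this.symm))
      refine ⟨y, hal ?_⟩
      rw [map_sub, ← frob_comm, hy, hρ]
    · rintro ⟨r, rfl⟩ g
      apply hzl
      rw [hind _ (tmapHom p n (algebraMap K L) r) (by rw [map_sub, frob_comm]) g,
        gal_algebraMap, sub_self, map_zero]
  · intro χ hχ hcont
    have hχ1 : χ 1 = 0 := by
      have := hχ 1 1
      rw [mul_one] at this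
      exact left_eq_add.mp this
    have hopen : IsOpen (Set.preimage χ {0}) :=
      (@continuous_def _ _ (krullTopology K L) ⊥ χ).mp hcont {0} trivial
    have hn1 : Set.preimage χ {0} ∈ nhds (1 : L ≃ₐ[K] L) := hopen.mem_nhds hχ1
    rw [krullTopology_mem_nhds_one_iff_of_normal] at hn1
    obtain ⟨E, hfd, hnor, hE⟩ := hn1
    obtain ⟨r, hr⟩ := hilbert90 p n
      (fun g => tmapHom p n (ZMod.castHom (dvd_refl p) L) (χ g))
      (fun g h => by rw [gal_fixed, hχ, map_add]) E (fun g hg => by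
        have : χ g = 0 := hE hg
        rw [this, map_zero])
    obtain ⟨a, ha⟩ := exists_of_gal_fixed p n (K := K) (tmapHom p n (frobenius L p) r - r)
      (fun g => by
        have h1 := frob_fixed p n (L := L) (χ g)
        rw [← hr g, map_sub] at h1
        rw [map_sub, ← frob_comm]
        linear_combination h1)
    refine ⟨a, ?_⟩
    funext g
    apply hzl
    rw [hind a r ha.symm g, hr]
end

section
/- Let p be a prime. For every finite abelian p-group A there exists a finite p-group B whose commutator subgroup [B,B] is isomorphic to A. -/
/-- The Heisenberg-type group `M × M × R` of a module `M` over `R`. -/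
@[ext] structure Heis (R M : Type) where
  a : M
  c : M
  t : R

namespace Heis

open scoped commutatorElement

variable {R M : Type} [CommRing R] [AddCommGroup M] [Module R M]

instance : Group (Heis R M) where
  mul x y := ⟨x.a + y.a, x.c + y.c + x.t • y.a, x.t + y.t⟩
  one := ⟨0, 0, 0⟩
  inv x := ⟨-x.a, -x.c + x.t • x.a, -x.t⟩
  mul_assoc x y z := by
    apply Heis.ext
    · exact add_assoc _ _ _
    · change x.c + y.c + x.t • y.a + z.c + (x.t + y.t) • z.a
        = x.c + (y.c + z.c + y.t • z.a) + x.t • (y.a + z.a)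
      module
    · exact add_assoc _ _ _
  one_mul x := by
    apply Heis.ext
    · exact zero_add _
    · change 0 + x.c + (0 : R) • x.a = x.c
      module
    · exact zero_add _
  mul_one x := by
    apply Heis.ext
    · exact add_zero _
    · change x.c + 0 + x.t • (0 : M) = x.c
      module
    · exact add_zero _
  inv_mul_cancel x := by
    apply Heis.ext
    · exact neg_add_cancel _
    · change -x.c + x.t • x.a + x.c + (-x.t) • x.a = 0
      module
    · exact neg_add_cancel _

theorem mul_def (x y : Heis R M) :
    x * y = ⟨x.a + y.a, x.c + y.c + x.t • y.a, x.t + y.t⟩ := rfl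

theorem inv_def (x : Heis R M) : x⁻¹ = ⟨-x.a, -x.c + x.t • x.a, -x.t⟩ := rfl

/-- The inclusion of the middle coordinate. -/
def incl (R M : Type) [CommRing R] [AddCommGroup M] [Module R M] :
    Multiplicative M →* Heis R M where
  toFun m := ⟨0, m.toAdd, 0⟩
  map_one' := rfl
  map_mul' x y := by simp [mul_def]

theorem incl_injective : Function.Injective (incl R M) := by
  intro x y h
  exact congrArg Heis.c h

theorem range_incl : (incl R M).range = commutator (Heis R M) := by
  apply le_antisymm
  · rintro _ ⟨m, rfl⟩
    have h : incl R M m = ⁅(⟨0, 0, 1⟩ : Heis R M), ⟨m.toAdd, 0, 0⟩⁆ := by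
      simp [incl, commutatorElement_def, mul_def, inv_def]
    rw [h]
    exact Subgroup.commutator_mem_commutator (Subgroup.mem_top _) (Subgroup.mem_top _)
  · rw [commutator_def, Subgroup.commutator_le]
    intro x _ y _
    refine ⟨Multiplicative.ofAdd (⁅x, y⁆ : Heis R M).c, ?_⟩
    apply Heis.ext
    · simp [incl, commutatorElement_def, mul_def, inv_def]
    · rfl
    · simp [incl, commutatorElement_def, mul_def, inv_def]

/-- The underlying type is a product. -/
def equivProd : Heis R M ≃ M × M × R where
  toFun x := (x.a, x.c, x.t)
  invFun x := ⟨x.1, x.2.1, x.2.2⟩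
  left_inv _ := rfl
  right_inv _ := rfl

end Heis

/-- For every prime `p` and every finite abelian `p`-group `A`, there is a
finite `p`-group `B` whose commutator subgroup `[B,B]` is isomorphic to `A`. -/
theorem exists_pGroup_commutator_mulEquiv
    (p : ℕ) (hp : p.Prime) (A : Type) [CommGroup A] [Finite A] (hA : IsPGroup p A) :
    ∃ (B : Type) (_ : Group B) (_ : Finite B),
      IsPGroup p B ∧ Nonempty (↥(commutator B) ≃* A) := by
  haveI : Fact p.Prime := ⟨hp⟩
  obtain ⟨k, hk⟩ := IsPGroup.iff_card.mp hA
  haveI : NeZero (p ^ k) := ⟨pow_ne_zero _ hp.ne_zero⟩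
  letI : Module (ZMod (p ^ k)) (Additive A) := AddCommGroup.zmodModule (fun x => by
    apply Additive.toMul.injective
    rw [toMul_nsmul, ← hk]
    exact pow_card_eq_one')
  have hc : Nat.card (Heis (ZMod (p ^ k)) (Additive A)) = p ^ (k + (k + k)) := by
    have h2 : Nat.card (Additive A) = p ^ k := hk
    rw [Nat.card_congr Heis.equivProd, Nat.card_prod, Nat.card_prod, h2, Nat.card_zmod,
      pow_add, pow_add]
  refine ⟨Heis (ZMod (p ^ k)) (Additive A), inferInstance, ?_, IsPGroup.of_card hc, ⟨?_⟩⟩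
  · exact Finite.of_equiv _ Heis.equivProd.symm
  · exact (MulEquiv.subgroupCongr Heis.range_incl.symm).trans
      ((MonoidHom.ofInjective Heis.incl_injective).symm.trans
        (MulEquiv.refl A : Multiplicative (Additive A) ≃* A))
end

section
/- Let k be a field of characteristic p > 0 and n ≥ 1. Then the polynomial f(u) = u^{p^n} − u − y^{p^n+1}, viewed as a polynomial in u over the rational function field k(y), is irreducible; equivalently, u^{p^n} − u − y^{p^n+1} is irreducible as an element of the polynomial ring k[y,u]. -/
open Polynomial in
lemma AS_aux {k : Type} [Field k] (q : ℕ) (hq : 0 < q) (A : Polynomial (Polynomial k))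
    (hA : A.natDegree < q) (h0 : A.coeff 0 ≠ 0) :
    (A.coeff 0).natDegree * q ≤
      (A.eval₂ (expand k q : Polynomial k →+* Polynomial k) (X ^ (q + 1))).natDegree := by
  apply le_natDegree_of_ne_zero
  rw [eval₂_eq_sum_range' _ hA, finsetSum_coeff, Finset.sum_eq_single 0]
  · simpa [coeff_expand_mul hq] using h0
  · intro i hi hi0
    rw [Finset.mem_range] at hi
    rw [← pow_mul, coeff_mul_X_pow']
    split_ifs with h
    · simp only [RingHom.coe_coe]
      rw [coeff_expand hq, if_neg]
      intro hd
      have h1 : q ∣ (q + 1) * i := (Nat.dvd_sub_iff_right h (dvd_mul_left _ _)).1 hd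
      have h2 : q ∣ i := by
        rw [add_mul, one_mul] at h1
        exact (Nat.dvd_add_right (dvd_mul_right q i)).1 h1
      exact absurd (Nat.le_of_dvd (Nat.pos_of_ne_zero hi0) h2) (by omega)
    · rfl
  · intro h
    exact absurd (Finset.mem_range.2 hq) h

open Polynomial in
lemma AS_monic {k : Type} [Field k] (q : ℕ) (hq : 2 ≤ q) :
    (X ^ q - X - C (X ^ (q + 1)) : Polynomial (Polynomial k)).Monic ∧
    (X ^ q - X - C (X ^ (q + 1)) : Polynomial (Polynomial k)).natDegree = q := by
  have hd : (X + C (X ^ (q + 1)) : Polynomial (Polynomial k)).degree < (q : WithBot ℕ) := by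
    rw [degree_X_add_C]
    exact_mod_cast hq
  rw [sub_sub]
  refine ⟨monic_X_pow_sub hd, ?_⟩
  apply natDegree_eq_of_degree_eq_some
  rw [degree_sub_eq_left_of_degree_lt, degree_X_pow]
  rwa [degree_X_pow]

open Polynomial in
lemma AS_irr {k : Type} [Field k] (q : ℕ) (hq : 2 ≤ q) :
    Irreducible (X ^ q - X - C (X ^ (q + 1)) : Polynomial (Polynomial k)) := by
  obtain ⟨hm, hdeg⟩ := AS_monic (k := k) q hq
  rw [hm.irreducible_iff_natDegree]
  refine ⟨fun h => by rw [h, natDegree_one] at hdeg; omega, ?_⟩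
  intro A B hA hB hAB
  by_contra! hne
  have hsum : A.natDegree + B.natDegree = q := by
    rw [← hA.natDegree_mul hB, hAB, hdeg]
  have hc : A.coeff 0 * B.coeff 0 = - X ^ (q + 1) := by
    rw [← mul_coeff_zero, hAB]
    rw [coeff_sub, coeff_C_zero]
    simp [coeff_X_pow, show ¬ (0 = q) by omega]
  have hcne : A.coeff 0 * B.coeff 0 ≠ 0 := by
    rw [hc]; simp
  have hA0 := left_ne_zero_of_mul hcne
  have hB0 := right_ne_zero_of_mul hcne
  have hcd : (A.coeff 0).natDegree + (B.coeff 0).natDegree = q + 1 := by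
    rw [← natDegree_mul hA0 hB0, hc]; simp
  have h1 := AS_aux q (by omega) A (by omega) hA0
  have h2 := AS_aux q (by omega) B (by omega) hB0
  have he : A.eval₂ (expand k q : Polynomial k →+* Polynomial k) (X ^ (q + 1)) *
      B.eval₂ (expand k q : Polynomial k →+* Polynomial k) (X ^ (q + 1)) = - X ^ (q + 1) := by
    rw [← eval₂_mul, hAB]
    rw [eval₂_sub, eval₂_sub, eval₂_X_pow, eval₂_X, eval₂_C, RingHom.coe_coe, map_pow, expand_X]
    ring
  have hene := he.trans_ne (neg_ne_zero.2 (pow_ne_zero (q + 1) (X_ne_zero (R := k))))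
  have hed := natDegree_mul (left_ne_zero_of_mul hene) (right_ne_zero_of_mul hene)
  rw [he, natDegree_neg, natDegree_X_pow] at hed
  have h3 : (q + 1) * q ≤ q + 1 := by
    rw [← hcd, add_mul, hcd]; omega
  nlinarith


/-- Let `k` be a field of characteristic `p > 0` and `n ≥ 1`.  The
polynomial `f(u) = u^{p^n} - u - y^{p^n+1}`, viewed as a polynomial in `u` over the
rational function field `k(y)`, is irreducible; equivalently, `u^{p^n} - u - y^{p^n+1}`
is irreducible as an element of `k[y][u]`. -/
theorem artinSchreier_poly_irreducible
    (p : ℕ) [Fact p.Prime] (k : Type) [Field k] [CharP k p] (n : ℕ) (hn : 1 ≤ n) :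
    Irreducible
      (Polynomial.X ^ (p ^ n) - Polynomial.X - Polynomial.C (RatFunc.X ^ (p ^ n + 1)) :
        Polynomial (RatFunc k)) ∧
    Irreducible
      (Polynomial.X ^ (p ^ n) - Polynomial.X - Polynomial.C (Polynomial.X ^ (p ^ n + 1)) :
        Polynomial (Polynomial k)) := by
  have hq : 2 ≤ p ^ n :=
    (Fact.out : p.Prime).two_le.trans (Nat.le_self_pow (by omega) p)
  have h := AS_irr (k := k) (p ^ n) hq
  refine ⟨?_, h⟩
  have h2 := ((AS_monic (k := k) (p ^ n) hq).1.irreducible_iff_irreducible_map_fraction_map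
    (K := RatFunc k)).1 h
  simpa [Polynomial.map_sub, RatFunc.algebraMap_X] using h2
end

section
/- Let k be an algebraically closed field of characteristic p > 0 and n ≥ 1, and let u be a root of the polynomial f(X) = X^{p^n} − X − y^{p^n+1} over the rational function field k(y) (in some algebraic closure of k(y)). Then the extension k(y)(u)/k(y) is a Galois extension of degree p^n whose Galois group is an elementary abelian p-group, isomorphic to the direct sum of n copies of ℤ/pℤ. -/
set_option synthInstance.maxHeartbeats 1000000

section ASHelpers
open Polynomial

variable {p : ℕ} [Fact p.Prime] {n : ℕ}
  {F : Type*} [Field F] [Fintype F] {K : Type*} [Field K] [CharP K p]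
  {Ω : Type*} [Field Ω] [Algebra K Ω]

lemma AS_prod (j : F →+* Ω) (t : Ω) :
    ∏ c : F, (t - j c) = t ^ Fintype.card F - t := by
  have h1 := FiniteField.X_pow_card_sub_X_natDegree_eq F (Fintype.one_lt_card (α := F))
  have h : (∏ c : F, (X - C c) : F[X]) = X ^ Fintype.card F - X := by
    have := prod_multiset_X_sub_C_of_monic_of_roots_card_eq
      (p := (X ^ Fintype.card F - X : F[X]))
      (monic_X_pow_sub (by rw [degree_X]; exact_mod_cast Fintype.one_lt_card))
      (by rw [FiniteField.roots_X_pow_card_sub_X, h1]; rfl)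
    rw [FiniteField.roots_X_pow_card_sub_X] at this
    exact this
  have := congrArg (eval₂ j t) h
  rw [eval₂_finsetProd] at this
  simpa using this

lemma AS_roots (hF : Fintype.card F = p ^ n) (i : F →+* K) {u r : Ω}
    (h : r ^ p ^ n - r = u ^ p ^ n - u) : ∃ c : F, r = u + algebraMap K Ω (i c) := by
  have : CharP Ω p := charP_of_injective_algebraMap (algebraMap K Ω).injective p
  have h1 := AS_prod ((algebraMap K Ω).comp i) (r - u)
  rw [hF, sub_pow_char_pow] at h1
  have h2 : r ^ p ^ n - u ^ p ^ n - (r - u) = 0 := by linear_combination h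
  rw [h2, Finset.prod_eq_zero_iff] at h1
  obtain ⟨c, -, hc⟩ := h1
  refine ⟨c, ?_⟩
  simp only [RingHom.comp_apply] at hc
  linear_combination hc

lemma AS_shift (hF : Fintype.card F = p ^ n) (i : F →+* K) (u : Ω) (c : F) :
    (u + algebraMap K Ω (i c)) ^ p ^ n - (u + algebraMap K Ω (i c)) = u ^ p ^ n - u := by
  have : CharP Ω p := charP_of_injective_algebraMap (algebraMap K Ω).injective p
  rw [add_pow_char_pow, ← map_pow, ← map_pow, ← hF, FiniteField.pow_card]
  ring

lemma AS_sep (hn : n ≠ 0) (a : K) : (X ^ p ^ n - X - C a : K[X]).Separable := by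
  refine ⟨0, -1, ?_⟩
  have : ((p : K[X])) = 0 := CharP.cast_eq_zero _ _
  have h2 : derivative (X ^ p ^ n : K[X]) = 0 := by
    rw [derivative_X_pow, C_eq_natCast, Nat.cast_pow, this, zero_pow hn, zero_mul]
  simp [h2]

lemma AS_gal [IsAlgClosed Ω] (hn : n ≠ 0) (hF : Fintype.card F = p ^ n) (i : F →+* K) (a : K)
    (u : Ω) (hu : u ^ p ^ n - u = algebraMap K Ω a) :
    IsGalois K (IntermediateField.adjoin K {u}) := by
  have hsep := AS_sep (p := p) hn a
  have e : IntermediateField.adjoin K {u} =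
      IntermediateField.adjoin K ((X ^ p ^ n - X - C a : K[X]).rootSet Ω) := by
    apply le_antisymm
    · rw [IntermediateField.adjoin_le_iff, Set.singleton_subset_iff]
      apply IntermediateField.subset_adjoin
      rw [mem_rootSet]
      refine ⟨hsep.ne_zero, ?_⟩
      simp [hu]
    · rw [IntermediateField.adjoin_le_iff]
      intro r hr
      rw [mem_rootSet] at hr
      have h2 := hr.2
      simp only [map_sub, map_pow, aeval_X, aeval_C, sub_eq_zero] at h2
      obtain ⟨c, rfl⟩ := AS_roots hF i (h2.trans hu.symm)
      exact add_mem (IntermediateField.mem_adjoin_simple_self K u)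
        (IntermediateField.algebraMap_mem _ _)
  rw [e]
  have := IntermediateField.adjoin_rootSet_isSplittingField
    (IsAlgClosed.splits ((X ^ p ^ n - X - C a : K[X]).map (algebraMap K Ω)))
  exact IsGalois.of_separable_splitting_field hsep

lemma AS_min [IsAlgClosed Ω] (hn : n ≠ 0) (hF : Fintype.card F = p ^ n) (i : F →+* K) (a : K)
    (u : Ω) (hu : u ^ p ^ n - u = algebraMap K Ω a) :
    (∃ P : F[X], ∀ c, (minpoly K u).eval (i c) = (minpoly K u).eval 0 + i (P.eval c)) ∧
    ∏ c : F, (minpoly K u).eval (i c) = ((-1) ^ p ^ n * a) ^ (minpoly K u).natDegree ∧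
    0 < (minpoly K u).natDegree ∧ (minpoly K u).natDegree ≤ p ^ n := by
  classical
  have hsep := AS_sep (p := p) hn a
  have hdeg : (X ^ p ^ n - X - C a : K[X]).natDegree = p ^ n := by
    have h1 : 1 < p ^ n := Nat.one_lt_pow hn (Fact.out : p.Prime).one_lt
    rw [natDegree_sub_C, FiniteField.X_pow_card_sub_X_natDegree_eq K h1]
  have hu0 : aeval u (X ^ p ^ n - X - C a : K[X]) = 0 := by simp [hu]
  have hint : IsIntegral K u := isAlgebraic_iff_isIntegral.mp ⟨_, hsep.ne_zero, hu0⟩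
  set g := minpoly K u with hg
  have hgm : g.Monic := minpoly.monic hint
  have hdvd : g ∣ (X ^ p ^ n - X - C a : K[X]) := minpoly.dvd K u hu0
  have hd0 : 0 < g.natDegree := minpoly.natDegree_pos hint
  have hgsep : g.Separable := hsep.of_dvd hdvd
  have hspl : (g.map (algebraMap K Ω)).Splits := IsAlgClosed.splits _
  have hroot : ∀ r ∈ (g.map (algebraMap K Ω)).roots, r ^ p ^ n - r = algebraMap K Ω a := by
    intro r hr
    have h1 : aeval r g = 0 := by
      have := (mem_roots'.mp hr).2
      rwa [IsRoot, eval_map_algebraMap] at this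
    have h2 := aeval_eq_zero_of_dvd_aeval_eq_zero hdvd h1
    simpa only [map_sub, map_pow, aeval_X, aeval_C, sub_eq_zero] using h2
  have hcard : Multiset.card (g.map (algebraMap K Ω)).roots = g.natDegree := by
    rw [← hspl.natDegree_eq_card_roots, natDegree_map]
  refine ⟨?_, ?_, hd0, hdeg ▸ natDegree_le_of_dvd hdvd hsep.ne_zero⟩
  · let H : Finset F := Finset.univ.filter fun c => aeval (u + algebraMap K Ω (i c)) g = 0
    have hHcard : H.card = g.natDegree := by
      rw [← hcard, ← Multiset.toFinset_card_of_nodup (nodup_roots hgsep.map)]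
      refine Finset.card_bij (fun c _ => u + algebraMap K Ω (i c)) ?_ ?_ ?_
      · intro c hc
        rw [Multiset.mem_toFinset, mem_roots (hgm.map _).ne_zero, IsRoot, eval_map_algebraMap]
        exact (Finset.mem_filter.mp hc).2
      · intro c _ c' _ h
        exact i.injective ((algebraMap K Ω).injective (add_left_cancel h))
      · intro r hr
        rw [Multiset.mem_toFinset] at hr
        obtain ⟨c, rfl⟩ := AS_roots hF i ((hroot r hr).trans hu.symm)
        refine ⟨c, ?_, rfl⟩
        have := (mem_roots'.mp hr).2
        rw [IsRoot, eval_map_algebraMap] at this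
        exact Finset.mem_filter.mpr ⟨Finset.mem_univ _, this⟩
    have hH : ∀ c ∈ H, g.eval (i c) = g.eval 0 := by
      intro c hc
      have h1 : g = g.comp (X + C (i c)) := by
        have hm : (g.comp (X + C (i c))).Monic := hgm.comp_X_add_C _
        have h2 : g ∣ g.comp (X + C (i c)) := by
          apply minpoly.dvd
          rw [aeval_comp]
          simpa using (Finset.mem_filter.mp hc).2
        symm
        refine eq_of_monic_of_dvd_of_natDegree_le hgm hm h2 ?_
        rw [natDegree_comp, natDegree_X_add_C, mul_one]
      conv_rhs => rw [h1]
      simp [eval_comp]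
    let P : F[X] := ∏ c ∈ H, (X - C c)
    have hPm : P.Monic := monic_prod_X_sub_C _ _
    have hPd : P.natDegree = g.natDegree := by
      rw [← hHcard]; simp [P]
    have key : g - C (g.eval 0) = P.map i := by
      refine eq_of_degree_sub_lt_of_eval_finset_eq (H.map ⟨i, i.injective⟩) ?_ ?_
      · rw [Finset.card_map, hHcard]
        have hlt : (C (g.eval 0)).degree < g.degree :=
          lt_of_le_of_lt degree_C_le (natDegree_pos_iff_degree_pos.mp hd0)
        have hde : (g - C (g.eval 0)).degree = g.degree := degree_sub_eq_left_of_degree_lt hlt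
        rw [← degree_eq_natDegree hgm.ne_zero, ← hde]
        apply degree_sub_lt_left
        · rw [hde, degree_map, degree_eq_natDegree hgm.ne_zero, degree_eq_natDegree hPm.ne_zero, hPd]
        · intro h0
          rw [h0, degree_zero, degree_eq_natDegree hgm.ne_zero] at hde
          simp at hde
        · rw [leadingCoeff_sub_of_degree_lt hlt, hgm.leadingCoeff, (hPm.map i).leadingCoeff]
      · intro x hx
        rw [Finset.mem_map] at hx
        obtain ⟨c, hc, rfl⟩ := hx
        have h0 : P.eval c = 0 := by
          simp only [P, eval_prod]
          exact Finset.prod_eq_zero hc (by simp)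
        simp [hH c hc, eval_map_apply, h0]
    refine ⟨P, fun c => ?_⟩
    have := congrArg (eval (i c)) key
    rw [eval_map_apply, eval_sub, eval_C] at this
    linear_combination this
  · apply (algebraMap K Ω).injective
    rw [map_prod]
    have h1 : ∀ c : F, algebraMap K Ω (g.eval (i c)) =
        ((g.map (algebraMap K Ω)).roots.map fun r => algebraMap K Ω (i c) - r).prod := by
      intro c
      rw [← eval_map_apply, hspl.eval_eq_prod_roots_of_monic (hgm.map _)]
    rw [Finset.prod_congr rfl fun c _ => h1 c, ← Multiset.prod_map_prod]
    have h2 : ∀ r ∈ (g.map (algebraMap K Ω)).roots, ∏ c : F, (algebraMap K Ω (i c) - r) =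
        algebraMap K Ω ((-1) ^ p ^ n * a) := by
      intro r hr
      have h3 := AS_prod ((algebraMap K Ω).comp i) r
      rw [hF, hroot r hr] at h3
      rw [map_mul, ← h3, ← hF, map_pow, map_neg, map_one, ← Finset.card_univ,
        ← Finset.prod_const, ← Finset.prod_mul_distrib]
      refine Finset.prod_congr rfl fun c _ => ?_
      simp
    rw [Multiset.map_congr rfl h2, Multiset.map_const', Multiset.prod_replicate, hcard, map_pow]

lemma AS_group [IsAlgClosed Ω] (hn : n ≠ 0) (hF : Fintype.card F = p ^ n) (i : F →+* K) (a : K)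
    (u : Ω) (hu : u ^ p ^ n - u = algebraMap K Ω a)
    (hd : Module.finrank K (IntermediateField.adjoin K {u}) = p ^ n) :
    Nonempty ((IntermediateField.adjoin K {u} ≃ₐ[K] IntermediateField.adjoin K {u}) ≃*
      Multiplicative F) := by
  have := AS_gal hn hF i a u hu
  have : FiniteDimensional K (IntermediateField.adjoin K {u}) :=
    Module.finite_of_finrank_pos (by rw [hd]; exact pow_pos (Fact.out : p.Prime).pos n)
  let v : IntermediateField.adjoin K {u} := IntermediateField.AdjoinSimple.gen K u
  have hv : v ^ p ^ n - v = algebraMap K _ a := Subtype.ext hu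
  have hex : ∀ s : (IntermediateField.adjoin K {u} ≃ₐ[K] IntermediateField.adjoin K {u}),
      ∃ c : F, s v = v + algebraMap K _ (i c) := by
    intro s
    apply AS_roots hF i
    rw [hv, ← map_pow, ← map_sub, hv, AlgEquiv.commutes]
  choose φ hφ using hex
  have hinj : Function.Injective
      (fun c : F => algebraMap K (IntermediateField.adjoin K {u}) (i c)) :=
    (algebraMap K (IntermediateField.adjoin K {u})).injective.comp i.injective
  let Φ : (IntermediateField.adjoin K {u} ≃ₐ[K] IntermediateField.adjoin K {u}) →*
      Multiplicative F := MonoidHom.mk' (fun s => Multiplicative.ofAdd (φ s)) (by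
    intro s t
    rw [← ofAdd_add]
    congr 1
    apply hinj
    have h1 := hφ (s * t)
    rw [AlgEquiv.mul_apply, hφ t, map_add, hφ s, AlgEquiv.commutes] at h1
    simp only [map_add]
    linear_combination -h1)
  have hΦ : Function.Injective Φ := by
    intro s t h
    have h' : φ s = φ t := Multiplicative.ofAdd.injective h
    have h2 : s v = t v := by rw [hφ, hφ, h']
    have h3 : (s : IntermediateField.adjoin K {u} →ₐ[K] IntermediateField.adjoin K {u}) = t :=
      IntermediateField.algHom_ext_of_eq_adjoin _ rfl (by
        intro x hx
        obtain rfl : x = u := hx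
        exact h2)
    ext x
    exact congrArg Subtype.val (DFunLike.congr_fun h3 x)
  refine ⟨MulEquiv.ofBijective Φ ?_⟩
  have : Finite (Multiplicative F) := inferInstanceAs (Finite F)
  refine (Nat.bijective_iff_injective_and_card Φ).mpr ⟨hΦ, ?_⟩
  rw [IsGalois.card_aut_eq_finrank, hd, ← hF, ← Nat.card_eq_fintype_card]
  rfl

lemma AS_intDegree_prod {k ι : Type*} [Field k] (s : Finset ι) (f : ι → RatFunc k)
    (h : ∀ c ∈ s, f c ≠ 0) : (∏ c ∈ s, f c).intDegree = ∑ c ∈ s, (f c).intDegree := by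
  classical
  induction s using Finset.induction_on with
  | empty => simp
  | insert c s hc ih =>
    rw [Finset.prod_insert hc, Finset.sum_insert hc, RatFunc.intDegree_mul
      (h c (Finset.mem_insert_self _ _))
      (Finset.prod_ne_zero_iff.mpr fun x hx => h x (Finset.mem_insert_of_mem hx)),
      ih fun x hx => h x (Finset.mem_insert_of_mem hx)]

lemma AS_intDegree_add_C {k : Type*} [Field k] (b : RatFunc k) (c : k)
    (h : b + RatFunc.C c ≠ 0) : (b + RatFunc.C c).intDegree ≤ max b.intDegree 0 := by
  by_cases hc : c = 0
  · simp [hc]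
  · have := RatFunc.intDegree_add_le (x := b) (y := RatFunc.C c)
      (by simpa using hc) h
    simpa using this

lemma AS_degree {k : Type*} [Field k] [CharP k p] {Ω : Type*} [Field Ω] [Algebra (RatFunc k) Ω]
    [CharP (RatFunc k) p]
    [IsAlgClosed Ω] (hn : n ≠ 0) (hF : Fintype.card F = p ^ n) (i : F →+* k)
    (u : Ω) (hu : u ^ p ^ n - u = algebraMap (RatFunc k) Ω (RatFunc.X ^ (p ^ n + 1))) :
    (minpoly (RatFunc k) u).natDegree = p ^ n := by
  obtain ⟨⟨P, hP⟩, hprod, hd0, hdq⟩ := AS_min hn hF ((RatFunc.C (K := k)).comp i) _ u hu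
  set d := (minpoly (RatFunc k) u).natDegree
  set b := (minpoly (RatFunc k) u).eval 0
  have hX : (RatFunc.X : RatFunc k) ≠ 0 := RatFunc.X_ne_zero
  have hX2 : ((-1) ^ p ^ n * RatFunc.X ^ (p ^ n + 1) : RatFunc k) ≠ 0 := by simp [hX]
  have hpow : ∀ (x : RatFunc k) (m : ℕ), x ≠ 0 → (x ^ m).intDegree = m * x.intDegree := by
    intro x m hx
    have := AS_intDegree_prod (Finset.range m) (fun _ => x) (fun _ _ => hx)
    simpa using this
  have hne : ∀ c : F, (minpoly (RatFunc k) u).eval ((RatFunc.C (K := k)).comp i c) ≠ 0 := by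
    intro c hc
    have : ∏ c : F, (minpoly (RatFunc k) u).eval (((RatFunc.C (K := k)).comp i) c) = 0 :=
      Finset.prod_eq_zero (Finset.mem_univ c) hc
    rw [hprod] at this
    exact pow_ne_zero _ hX2 this
  have hdeg := congrArg RatFunc.intDegree hprod
  rw [AS_intDegree_prod _ _ fun c _ => hne c, hpow _ _ hX2, RatFunc.intDegree_mul
    (by simp) (pow_ne_zero _ hX), hpow _ _ hX, hpow _ _ (by simp), RatFunc.intDegree_neg,
    RatFunc.intDegree_one, RatFunc.intDegree_X] at hdeg
  have hle : ∀ c : F, (b + RatFunc.C (i (P.eval c))).intDegree ≤ max b.intDegree 0 := by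
    intro c
    apply AS_intDegree_add_C
    have := hne c
    rwa [hP c] at this
  have hq0 : 0 < p ^ n := pow_pos (Fact.out : p.Prime).pos n
  simp only [hP] at hdeg
  simp only [RingHom.comp_apply] at hdeg
  rcases le_or_gt b.intDegree 0 with hb | hb
  · exfalso
    have : ∑ c : F, (b + RatFunc.C (i (P.eval c))).intDegree ≤ 0 :=
      Finset.sum_nonpos fun c _ => (hle c).trans (by simp [hb])
    rw [hdeg] at this
    have : (0:ℤ) < d * ((p ^ n : ℕ) * 0 + (p ^ n + 1 : ℕ) * 1) := by positivity
    linarith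
  · have heq : ∀ c : F, (b + RatFunc.C (i (P.eval c))).intDegree = b.intDegree := by
      intro c
      apply le_antisymm ((hle c).trans (by simp [hb.le]))
      have h1 := AS_intDegree_add_C (b + RatFunc.C (i (P.eval c))) (-(i (P.eval c))) (by
        rw [map_neg, add_neg_cancel_right]
        rintro h0
        rw [h0] at hb
        simp at hb)
      rw [map_neg, add_neg_cancel_right] at h1
      rcases le_max_iff.mp h1 with h | h
      · exact h
      · omega
    rw [Finset.sum_congr rfl fun c _ => heq c, Finset.sum_const, Finset.card_univ, hF] at hdeg
    have h1 : ((p ^ n : ℕ) : ℤ) ∣ (d * (p ^ n + 1) : ℕ) := ⟨b.intDegree, by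
      rw [nsmul_eq_mul] at hdeg
      push_cast at hdeg ⊢
      linarith⟩
    rw [Int.natCast_dvd_natCast] at h1
    have h2 : p ^ n ∣ d := (Nat.Coprime.dvd_of_dvd_mul_right (by simp) h1)
    exact le_antisymm hdq (Nat.le_of_dvd hd0 h2)

end ASHelpers

/-- Let `k` be an algebraically closed field of characteristic `p > 0`,
`n ≥ 1`, and let `u` be a root (in an algebraic closure of `k(y)`) of the polynomial
`f(X) = X^{p^n} - X - y^{p^n+1}` over the rational function field `k(y)`.  Then
`k(y)(u)/k(y)` is a Galois extension of degree `p^n` whose Galois group is an elementary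
abelian `p`-group, isomorphic to the direct sum of `n` copies of `ℤ/pℤ`. -/
theorem artinSchreier_extension_galois_elementaryAbelian
    (p : ℕ) [Fact p.Prime] (k : Type) [Field k] [IsAlgClosed k] [CharP k p]
    (n : ℕ) (hn : 1 ≤ n) (u : AlgebraicClosure (RatFunc k))
    (hu : Polynomial.aeval u
        (Polynomial.X ^ (p ^ n) - Polynomial.X - Polynomial.C (RatFunc.X ^ (p ^ n + 1)) :
          Polynomial (RatFunc k)) = 0) :
    IsGalois (RatFunc k) (IntermediateField.adjoin (RatFunc k) {u}) ∧
    Module.finrank (RatFunc k) (IntermediateField.adjoin (RatFunc k) {u}) = p ^ n ∧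
    Nonempty
      ((IntermediateField.adjoin (RatFunc k) {u} ≃ₐ[RatFunc k]
          IntermediateField.adjoin (RatFunc k) {u}) ≃*
        Multiplicative (Fin n → ZMod p)) := by
  have hn0 : n ≠ 0 := by omega
  let : Algebra (ZMod p) k := ZMod.algebra k p
  let : Fintype (GaloisField p n) := Fintype.ofFinite _
  have hF : Fintype.card (GaloisField p n) = p ^ n := by
    rw [← Nat.card_eq_fintype_card, GaloisField.card p n hn0]
  let i : GaloisField p n →+* k :=
    (IsAlgClosed.lift (R := ZMod p) (S := GaloisField p n) (M := k)).toRingHom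
  have : CharP (RatFunc k) p :=
    charP_of_injective_ringHom (RatFunc.C (K := k)).injective p
  have hu' : u ^ p ^ n - u =
      algebraMap (RatFunc k) (AlgebraicClosure (RatFunc k)) (RatFunc.X ^ (p ^ n + 1)) := by
    rw [← sub_eq_zero, ← hu]
    simp only [map_sub, map_pow, Polynomial.aeval_X, Polynomial.aeval_C]
  have hdeg := AS_degree hn0 hF i u hu'
  have hint : IsIntegral (RatFunc k) u := by
    by_contra h
    rw [minpoly.eq_zero h] at hdeg
    have := pow_pos (Fact.out : p.Prime).pos n
    simp at hdeg
    omega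
  have hfin := (IntermediateField.adjoin.finrank hint).trans hdeg
  refine ⟨AS_gal hn0 hF ((RatFunc.C (K := k)).comp i) _ u hu', hfin, ?_⟩
  obtain ⟨e⟩ := AS_group hn0 hF ((RatFunc.C (K := k)).comp i) _ u hu' hfin
  have e2 : GaloisField p n ≃ₗ[ZMod p] (Fin n → ZMod p) :=
    LinearEquiv.ofFinrankEq _ _ (by rw [GaloisField.finrank p hn0]; simp)
  exact ⟨e.trans (AddEquiv.toMultiplicative e2.toAddEquiv)⟩
end
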